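/- Let m ≥ 3 and let a_1, …, a_{3m}, T be positive integers with T/4 < a_j < T/2 for all j and ∑_{j=1}^{3m} a_j = mT. Define an LSA instance of order n = 6m with identical valuations: v_{ijk} = a_j if j = k ≤ 3m; otherwise v_{ijk} = T if j = 3m−1 and k ≤ 2m+1; otherwise v_{ijk} = T if j = 3m and k ≤ 3m−1; otherwise v_{ijk} = 0. Then there exists a proportional (PROP) complete allocation if and only if there exists a partition of [3m] into m triples S_1, …, S_m with ∑_{j∈S_i} a_j = T for each i ∈ [m]. -/

import Mathlib

/-!
The total value is `6mT`, so the proportional share of each of the `6m` agents is `T`, and in a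
proportional allocation everybody gets exactly `T`. A complete allocation is a Latin square of
order `6m` (rows are items, columns are rounds, symbols are agents).

Given such an allocation, the `5m` cells of value `T` belong to distinct agents, none of whom owns
a diagonal cell of positive value. The remaining `m` agents share the diagonal cells `a j`, each
collecting at most `T`, hence exactly `T`; the bounds `T / 4 < a j < T / 2` force three cells each
(`partition_of_owner`).

Conversely, given triples `f`, the top left `3m × 3m` corner is written down explicitly
(`corner`): `f j` in the diagonal cell `j`, and off the diagonal a cyclic pattern modulo `5m` on the
other `5m` symbols, with distinct row shifts chosen so that each of these symbols occupies one cell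
of value `T`. A `3m × 3m` array on `6m` symbols without repetitions in rows and columns always
extends to a Latin square of order `6m` (`extend_square`, an instance of Ryser's theorem). Both
extension steps, new columns and new rows, decompose a regular bipartite graph into perfect
matchings (`exists_matchings`).
-/

/-- A feasible partial allocation of an LSA instance of order `n`. -/
def IsPartialAlloc (n : ℕ) (A : Finset (Fin n × Fin n × Fin n)) : Prop :=
  (∀ i j k k', (i, j, k) ∈ A → (i, j, k') ∈ A → k = k') ∧
  (∀ i j j' k, (i, j, k) ∈ A → (i, j', k) ∈ A → j = j') ∧
  (∀ i i' j k, (i, j, k) ∈ A → (i', j, k) ∈ A → i = i')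

/-- A complete allocation: a feasible partial allocation with `n²` triples. -/
def IsCompleteAlloc (n : ℕ) (A : Finset (Fin n × Fin n × Fin n)) : Prop :=
  IsPartialAlloc n A ∧ A.card = n ^ 2

/-- The bundle `A_i` of item–round pairs allocated to agent `i`. -/
def bundle {n : ℕ} (A : Finset (Fin n × Fin n × Fin n)) (i : Fin n) :
    Finset (Fin n × Fin n) :=
  (A.filter (fun t => t.1 = i)).image Prod.snd

/-- `v_i(S)`: agent `i`'s value for a set `S` of item–round pairs. -/
def val {n : ℕ} (v : Fin n → Fin n → Fin n → ℕ) (i : Fin n)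
    (S : Finset (Fin n × Fin n)) : ℕ :=
  ∑ p ∈ S, v i p.1 p.2

/-- Proportional: each agent's value is at least `v_i(M×R)/n` (as reals). -/
def PROP {n : ℕ} (v : Fin n → Fin n → Fin n → ℕ)
    (A : Finset (Fin n × Fin n × Fin n)) : Prop :=
  ∀ i, (val v i Finset.univ : ℝ) / (n : ℝ) ≤ (val v i (bundle A i) : ℝ)

/-! ### Decomposing regular bipartite graphs and completing Latin squares -/

/-- A finite `d`-regular bipartite graph decomposes into `d` perfect matchings `M 0, …, M (d-1)`:
peel off one matching at a time with Hall's theorem. -/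
theorem exists_matchings {α β : Type*} [Fintype α] [Fintype β] (d : ℕ) (R : α → β → Prop)
    (h1 : ∀ a, Nat.card {b // R a b} = d) (h2 : ∀ b, Nat.card {a // R a b} = d) :
    ∃ M : Fin d → α → β, (∀ t, Function.Injective (M t)) ∧
      (∀ a, Function.Injective (fun t => M t a)) ∧ ∀ t a, R a (M t a) := by
  classical
  simp only [Nat.card_eq_fintype_card, Fintype.card_subtype] at h1 h2
  induction d generalizing R with
  | zero => exact ⟨fun t => t.elim0, fun t => t.elim0, fun a t => t.elim0, fun t => t.elim0⟩
  | succ d ih =>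
    -- Hall's condition, by counting the edges leaving `s` from both ends
    have hall : ∀ s : Finset α,
        s.card ≤ (s.biUnion fun a => Finset.univ.filter (R a)).card := by
      intro s
      have := Finset.card_mul_le_card_mul (s := s)
        (t := s.biUnion fun a => Finset.univ.filter (R a)) R (m := d + 1) (n := d + 1)
        (fun a ha => by
          rw [← h1 a]
          apply Finset.card_le_card
          intro b hb
          simp only [Finset.mem_filter, Finset.mem_univ, true_and] at hb
          simp only [Finset.bipartiteAbove, Finset.mem_filter, Finset.mem_biUnion,
            Finset.mem_univ, true_and]
          exact ⟨⟨a, ha, hb⟩, hb⟩)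
        (fun b _ => by
          rw [← h2 b]
          exact Finset.card_le_card (Finset.filter_subset_filter _ (Finset.subset_univ _)))
      exact Nat.le_of_mul_le_mul_right this (Nat.succ_pos d)
    have hcard : Fintype.card α = Fintype.card β := by
      have := Finset.card_mul_eq_card_mul (s := Finset.univ) (t := Finset.univ) R
        (m := d + 1) (n := d + 1) (fun a _ => h1 a) (fun b _ => h2 b)
      exact Nat.eq_of_mul_eq_mul_right (Nat.succ_pos d) this
    obtain ⟨f, hf, hfR⟩ := (Finset.all_card_le_biUnion_card_iff_exists_injective _).1 hall
    simp only [Finset.mem_filter, Finset.mem_univ, true_and] at hfR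
    have hbij : Function.Bijective f := (Fintype.bijective_iff_injective_and_card f).2 ⟨hf, hcard⟩
    obtain ⟨M, hM1, hM2, hM3⟩ := ih (fun a b => R a b ∧ b ≠ f a)
      (fun a => by
        refine (congrArg Finset.card (?_ : _ = (Finset.univ.filter (R a)).erase (f a))).trans ?_
        · ext b; simp [and_comm]
        rw [Finset.card_erase_of_mem (by simpa using hfR a), h1]; rfl)
      (fun b => by
        obtain ⟨a₀, rfl⟩ := hbij.2 b
        refine (congrArg Finset.card
          (?_ : _ = (Finset.univ.filter fun a => R a (f a₀)).erase a₀)).trans ?_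
        · ext a; simp [and_comm, hf.eq_iff, eq_comm]
        rw [Finset.card_erase_of_mem (by simpa using hfR a₀), h2]; rfl)
    refine ⟨Fin.cons f M, ?_, ?_, ?_⟩
    · intro t
      cases t using Fin.cases with
      | zero => simpa using hf
      | succ t => simpa using hM1 t
    · intro a t t' h
      cases t using Fin.cases with
      | zero =>
        cases t' using Fin.cases with
        | zero => rfl
        | succ t' => exact absurd (by simpa using h.symm) (hM3 t' a).2
      | succ t =>
        cases t' using Fin.cases with
        | zero => exact absurd (by simpa using h) (hM3 t a).2
        | succ t' => exact congrArg Fin.succ (hM2 a (by simpa using h))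
    · intro t a
      cases t using Fin.cases with
      | zero => simpa using hfR a
      | succ t => simpa using (hM3 t a).1

/-- An `h × h` array on `2h` symbols without repetitions in rows and columns extends to
`h × 2h`. The graph joining row `i` to the symbols it misses is made `h`-regular by adding a dummy
row joined to exactly the symbols of row `i`; its matchings give the new columns. -/
theorem extend_columns (h : ℕ) (A : Fin h → Fin h → Fin (h + h))
    (hr : ∀ i, Function.Injective (A i)) (hc : ∀ j, Function.Injective fun i => A i j) :
    ∃ B : Fin h → Fin h ⊕ Fin h → Fin (h + h), (∀ i, Function.Injective (B i)) ∧
      (∀ j, Function.Injective fun i => B i j) ∧ ∀ i j, B i (Sum.inl j) = A i j := by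
  classical
  have hin : ∀ i, Nat.card {s // s ∈ Set.range (A i)} = h := fun i => by
    rw [← Nat.card_congr (Equiv.ofInjective _ (hr i))]; simp
  have hout : ∀ i, Nat.card {s // ¬ s ∈ Set.range (A i)} = h := fun i => by
    have := hin i
    rw [Nat.card_eq_fintype_card] at this
    rw [Nat.card_eq_fintype_card, Fintype.card_subtype_compl, this]; simp
  obtain ⟨M, h1, h2, h3⟩ := exists_matchings h
    (fun (x : Fin h ⊕ Fin h) (s : Fin (h + h)) =>
      Sum.elim (fun i => ¬ s ∈ Set.range (A i)) (fun i => s ∈ Set.range (A i)) x)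
    (by rintro (i | i); exacts [hout i, hin i])
    (by
      intro s
      rw [Nat.card_congr (Equiv.subtypeSum)]
      simp only [Sum.elim_inl, Sum.elim_inr]
      simp only [Nat.card_eq_fintype_card, Fintype.card_sum, Fintype.card_subtype_compl]
      have := Fintype.card_subtype_le (fun i => s ∈ Set.range (A i))
      rw [Fintype.card_fin] at *
      omega)
  refine ⟨fun i => Sum.elim (A i) (fun t => M t (Sum.inl i)), ?_, ?_, fun _ _ => rfl⟩
  · rintro i (j | t) (j' | t') hjj
    · exact congrArg _ (hr i hjj)
    · exact absurd ⟨j, hjj⟩ (h3 t' (Sum.inl i))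
    · exact absurd ⟨j', hjj.symm⟩ (h3 t (Sum.inl i))
    · exact congrArg _ (h2 _ hjj)
  · rintro (j | t) i i' hii
    · exact hc j hii
    · exact Sum.inl_injective (h1 t hii)

/-- An `h × 2h` Latin rectangle extends to a Latin square: the graph joining each column to the
symbols it misses is `h`-regular, and its matchings are the new rows. -/
theorem extend_rows (h : ℕ) (B : Fin h → Fin h ⊕ Fin h → Fin (h + h))
    (hr : ∀ i, Function.Injective (B i)) (hc : ∀ j, Function.Injective fun i => B i j) :
    ∃ L : Fin h ⊕ Fin h → Fin h ⊕ Fin h → Fin (h + h), (∀ i, Function.Injective (L i)) ∧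
      (∀ j, Function.Injective fun i => L i j) ∧ ∀ i j, L (Sum.inl i) j = B i j := by
  classical
  have hb : ∀ i, Function.Bijective (B i) := fun i =>
    (Fintype.bijective_iff_injective_and_card _).2 ⟨hr i, by simp⟩
  obtain ⟨M, h1, h2, h3⟩ := exists_matchings h
    (fun (j : Fin h ⊕ Fin h) (s : Fin (h + h)) => ¬ s ∈ Set.range (fun i => B i j))
    (by
      intro j
      have : Nat.card {s // s ∈ Set.range (fun i => B i j)} = h := by
        rw [← Nat.card_congr (Equiv.ofInjective _ (hc j))]; simp
      rw [Nat.card_eq_fintype_card] at this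
      rw [Nat.card_eq_fintype_card, Fintype.card_subtype_compl, this]; simp)
    (by
      intro s
      -- the columns containing `s` are in bijection with the rows
      choose c hcs using fun i => (hb i).2 s
      have hci : Function.Injective c := fun i i' hii =>
        hc (c i) (by simp only [hcs]; rw [hii, hcs])
      have : Nat.card {j // s ∈ Set.range (fun i => B i j)} = h := by
        have e : {j // s ∈ Set.range (fun i => B i j)} ≃ {j // j ∈ Set.range c} :=
          Equiv.subtypeEquivRight fun j => by
            constructor
            · rintro ⟨i, hi⟩; exact ⟨i, hr i (by rw [hcs]; exact hi.symm)⟩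
            · rintro ⟨i, rfl⟩; exact ⟨i, hcs i⟩
        rw [Nat.card_congr e, ← Nat.card_congr (Equiv.ofInjective _ hci)]; simp
      rw [Nat.card_eq_fintype_card] at this
      rw [Nat.card_eq_fintype_card, Fintype.card_subtype_compl, this]; simp)
  refine ⟨Sum.elim B M, ?_, ?_, fun _ _ => rfl⟩
  · rintro (i | t)
    exacts [hr i, h1 t]
  · rintro j (i | t) (i' | t') hjj
    · exact congrArg _ (hc j hjj)
    · exact absurd ⟨i, hjj⟩ (h3 t' j)
    · exact absurd ⟨i', hjj.symm⟩ (h3 t j)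
    · exact congrArg _ (h2 j hjj)

/-- The case `r = s = n / 2` of Ryser's theorem: an `h × h` array on `n = 2h` symbols without
repetitions in rows and columns is the top left corner of a Latin square of order `n`. -/
theorem extend_square (h n : ℕ) (hn : n = h + h) (A : Fin h → Fin h → Fin n)
    (hr : ∀ i, Function.Injective (A i)) (hc : ∀ j, Function.Injective fun i => A i j) :
    ∃ L : Fin n → Fin n → Fin n, (∀ i, Function.Injective (L i)) ∧
      (∀ j, Function.Injective fun i => L i j) ∧
      ∀ (i j : Fin n) (hi : (i : ℕ) < h) (hj : (j : ℕ) < h), L i j = A ⟨i, hi⟩ ⟨j, hj⟩ := by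
  subst hn
  obtain ⟨B, hB1, hB2, hB3⟩ := extend_columns h A hr hc
  obtain ⟨L, hL1, hL2, hL3⟩ := extend_rows h B hB1 hB2
  let e : Fin (h + h) ≃ Fin h ⊕ Fin h := finSumFinEquiv.symm
  refine ⟨fun i j => L (e i) (e j), fun i => (hL1 _).comp e.injective,
    fun j => (hL2 (e j)).comp e.injective, fun i j hi hj => ?_⟩
  have key : ∀ (x : Fin (h + h)) (hx : (x : ℕ) < h), e x = Sum.inl ⟨x, hx⟩ := fun x hx =>
    finSumFinEquiv_symm_apply_castAdd (n := h) ⟨x, hx⟩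
  show L (e i) (e j) = _
  rw [key i hi, key j hj, hL3, hB3]

/-! ### The total value -/

theorem sum_indicator_rect (n b c T : ℕ) (hc : c < n) (hb : b ≤ n) :
    ∑ j ∈ Finset.range n, ∑ k ∈ Finset.range n, (if j = c ∧ k < b then T else 0) = b * T := by
  rw [Finset.sum_eq_single_of_mem c (Finset.mem_range.2 hc) (fun j _ hj => by simp [hj])]
  simp only [true_and]
  rw [← Finset.sum_filter, Finset.sum_const, smul_eq_mul]
  congr 1
  have : (Finset.range n).filter (· < b) = Finset.range b := by
    ext k; simp only [Finset.mem_filter, Finset.mem_range]; omega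
  rw [this, Finset.card_range]

/-- The common value of item `j` in round `k`. -/
def cellValue (m T : ℕ) (a : ℕ → ℕ) (j k : ℕ) : ℕ :=
  if j = k ∧ j < 3 * m then a j
  else if j = 3 * m - 2 ∧ k < 2 * m + 1 then T
  else if j = 3 * m - 1 ∧ k < 3 * m - 1 then T
  else 0

theorem sum_cellValue (m T : ℕ) (hm : 3 ≤ m) (a : ℕ → ℕ)
    (hsum : ∑ j ∈ Finset.range (3 * m), a j = m * T) :
    ∑ p : Fin (6 * m) × Fin (6 * m), cellValue m T a p.1 p.2 = 6 * m * T := by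
  have hsplit : ∀ j k, cellValue m T a j k = (if j = k ∧ j < 3 * m then a j else 0)
      + (if j = 3 * m - 2 ∧ k < 2 * m + 1 then T else 0)
      + (if j = 3 * m - 1 ∧ k < 3 * m - 1 then T else 0) := by
    intro j k
    unfold cellValue
    split_ifs <;> omega
  rw [Fintype.sum_prod_type]
  simp only
  rw [Fin.sum_univ_eq_sum_range (fun j => ∑ k : Fin (6 * m), cellValue m T a j k) (6 * m)]
  have hin : ∀ j, ∑ k : Fin (6 * m), cellValue m T a j k
      = ∑ k ∈ Finset.range (6 * m), cellValue m T a j k :=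
    fun j => Fin.sum_univ_eq_sum_range (cellValue m T a j) (6 * m)
  simp only [hin]
  simp only [hsplit, Finset.sum_add_distrib]
  rw [sum_indicator_rect _ _ _ _ (by omega) (by omega),
    sum_indicator_rect _ _ _ _ (by omega) (by omega)]
  have hd : ∑ j ∈ Finset.range (6 * m), ∑ k ∈ Finset.range (6 * m),
      (if j = k ∧ j < 3 * m then a j else 0) = m * T := by
    have : ∀ j ∈ Finset.range (6 * m), ∑ k ∈ Finset.range (6 * m),
        (if j = k ∧ j < 3 * m then a j else 0) = if j < 3 * m then a j else 0 := by
      intro j hj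
      rw [Finset.sum_eq_single_of_mem j hj (fun k _ hk => by simp [hk.symm])]
      simp
    rw [Finset.sum_congr rfl this, ← Finset.sum_filter, ← hsum]
    congr 1
    ext j; simp only [Finset.mem_filter, Finset.mem_range]; omega
  rw [hd, ← add_mul, ← add_mul]
  congr 1; omega

/-! ### Allocations as Latin squares -/

/-- A complete allocation assigns every item in every round to exactly one agent. -/
theorem exists_owner {n : ℕ} {A : Finset (Fin n × Fin n × Fin n)} (hA : IsCompleteAlloc n A) :
    ∃ L : Fin n × Fin n → Fin n, ∀ i p, (i, p) ∈ A ↔ L p = i := by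
  classical
  obtain ⟨⟨-, -, h⟩, hcard⟩ := hA
  have hinj : Set.InjOn Prod.snd (A : Set (Fin n × Fin n × Fin n)) := by
    rintro ⟨i, j, k⟩ hx ⟨i', j', k'⟩ hy hxy
    obtain ⟨rfl, rfl⟩ := Prod.mk.inj hxy
    rw [h i i' j k hx hy]
  have himg : A.image Prod.snd = Finset.univ := by
    apply Finset.eq_univ_of_card
    rw [Finset.card_image_of_injOn hinj, hcard]; simp [sq]
  have hex : ∀ p : Fin n × Fin n, ∃ i, (i, p) ∈ A := by
    intro p
    have : p ∈ A.image Prod.snd := himg ▸ Finset.mem_univ p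
    obtain ⟨⟨i, q⟩, hx, rfl⟩ := Finset.mem_image.1 this
    exact ⟨i, hx⟩
  choose L hL using hex
  exact ⟨L, fun i p => ⟨fun hi => h _ _ p.1 p.2 (hL p) hi, fun hi => hi ▸ hL p⟩⟩

theorem bundle_eq {n : ℕ} {A : Finset (Fin n × Fin n × Fin n)} {L : Fin n × Fin n → Fin n}
    (hL : ∀ i p, (i, p) ∈ A ↔ L p = i) (i : Fin n) :
    bundle A i = Finset.univ.filter fun p => L p = i := by
  ext p
  simp only [bundle, Finset.mem_image, Finset.mem_filter, Finset.mem_univ, true_and]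
  constructor
  · rintro ⟨⟨i', q⟩, ⟨hx, rfl⟩, rfl⟩
    exact (hL _ _).1 hx
  · intro hp
    exact ⟨(i, p), ⟨(hL i p).2 hp, rfl⟩, rfl⟩

/-- Everybody's proportional share is `T`, so `PROP` says that in the array `L` of owners every
symbol collects value at least `T`. -/
theorem prop_iff (m T : ℕ) (hm : 3 ≤ m) (a : ℕ → ℕ)
    (hsum : ∑ j ∈ Finset.range (3 * m), a j = m * T)
    (v : Fin (6 * m) → Fin (6 * m) → Fin (6 * m) → ℕ)
    (hv : ∀ i j k, v i j k = cellValue m T a j k)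
    {A : Finset (Fin (6 * m) × Fin (6 * m) × Fin (6 * m))}
    {L : Fin (6 * m) × Fin (6 * m) → Fin (6 * m)} (hL : ∀ i p, (i, p) ∈ A ↔ L p = i) :
    PROP v A ↔ ∀ i, T ≤ ∑ p with L p = i, cellValue m T a p.1 p.2 := by
  have hn : (0 : ℝ) < ((6 * m : ℕ) : ℝ) := by exact_mod_cast (by omega : 0 < 6 * m)
  unfold PROP
  refine forall_congr' fun i => ?_
  simp only [val, hv, bundle_eq hL, sum_cellValue m T hm a hsum]
  rw [div_le_iff₀ hn]
  norm_cast
  rw [mul_comm]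
  exact Nat.mul_le_mul_right_iff (by omega)

/-! ### The cells of positive value -/

/-- The `5m` cells of value `T`, enumerated: first those of item `3m - 2`, then those of item
`3m - 1` (counting from `0`). -/
def bigCell (m : ℕ) (t : Fin (5 * m)) : Fin (6 * m) × Fin (6 * m) :=
  if ht : (t : ℕ) < 2 * m + 1 then (⟨3 * m - 2, by omega⟩, ⟨t, by omega⟩)
  else (⟨3 * m - 1, by omega⟩, ⟨t - (2 * m + 1), by omega⟩)

theorem bigCell_injective (m : ℕ) (hm : 3 ≤ m) : Function.Injective (bigCell m) := by
  intro t t' h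
  unfold bigCell at h
  split_ifs at h <;> simp only [Prod.mk.injEq, Fin.mk.injEq] at h <;> ext <;> omega

theorem bigCell_ne (m : ℕ) (hm : 3 ≤ m) (t : Fin (5 * m)) :
    (bigCell m t).1 ≠ (bigCell m t).2 := by
  unfold bigCell
  split_ifs <;> simp only [ne_eq, Fin.mk.injEq] <;> omega

theorem cellValue_bigCell (m T : ℕ) (hm : 3 ≤ m) (a : ℕ → ℕ) (t : Fin (5 * m)) :
    cellValue m T a (bigCell m t).1 (bigCell m t).2 = T := by
  unfold bigCell
  split_ifs with h
  · simp only [cellValue]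
    rw [if_neg (by omega), if_pos ⟨trivial, h⟩]
  · simp only [cellValue]
    rw [if_neg (by omega), if_neg (by omega), if_pos ⟨trivial, by omega⟩]

/-- The diagonal cell of item `j < 3m`, of value `a j`. -/
def diagCell (m : ℕ) (j : Fin (3 * m)) : Fin (6 * m) × Fin (6 * m) :=
  (⟨j, by omega⟩, ⟨j, by omega⟩)

theorem diagCell_injective (m : ℕ) : Function.Injective (diagCell m) := by
  intro j j' h
  simp only [diagCell, Prod.mk.injEq, Fin.mk.injEq] at h
  ext; omega

theorem cellValue_diagCell (m T : ℕ) (a : ℕ → ℕ) (j : Fin (3 * m)) :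
    cellValue m T a (diagCell m j).1 (diagCell m j).2 = a j := by
  simp [diagCell, cellValue]

/-! ### From an allocation to a partition -/

/-- Any owner map giving every agent at least `T` yields a partition into triples of sum `T`:
everybody gets exactly `T`, so the `5m` cells of value `T` go to distinct agents who own no
diagonal cell, and the diagonal is shared by the other `m`. -/
theorem partition_of_owner (m T : ℕ) (hm : 3 ≤ m) (hT : 0 < T) (a : ℕ → ℕ)
    (ha : ∀ j, j < 3 * m → T < 4 * a j ∧ 2 * a j < T)
    (hsum : ∑ j ∈ Finset.range (3 * m), a j = m * T)
    (L : Fin (6 * m) × Fin (6 * m) → Fin (6 * m))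
    (hL : ∀ i, T ≤ ∑ p with L p = i, cellValue m T a p.1 p.2) :
    ∃ f : Fin (3 * m) → Fin m, ∀ i : Fin m,
        (Finset.univ.filter (fun j => f j = i)).card = 3 ∧
        ∑ j ∈ Finset.univ.filter (fun j => f j = i), a (j : ℕ) = T := by
  classical
  have hEq : ∀ i, ∑ p with L p = i, cellValue m T a p.1 p.2 = T := by
    have htot : ∑ i : Fin (6 * m), T
        = ∑ i : Fin (6 * m), ∑ p with L p = i, cellValue m T a p.1 p.2 := by
      rw [Finset.sum_fiberwise, sum_cellValue m T hm a hsum]; simp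
    intro i
    exact ((Finset.sum_eq_sum_iff_of_le fun i _ => hL i).1 htot i (Finset.mem_univ i)).symm
  -- two distinct cells of the same agent have total value at most `T`
  have hpair : ∀ p q, p ≠ q → L p = L q →
      cellValue m T a p.1 p.2 + cellValue m T a q.1 q.2 ≤ T := by
    intro p q hpq hLpq
    refine le_trans ?_ (hEq (L q)).le
    rw [← Finset.sum_pair (f := fun p => cellValue m T a p.1 p.2) hpq]
    apply Finset.sum_le_sum_of_subset
    intro x hx
    simp only [Finset.mem_insert, Finset.mem_singleton] at hx
    rcases hx with rfl | rfl <;> simp [hLpq]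
  let g : Fin (5 * m) → Fin (6 * m) := fun t => L (bigCell m t)
  have hg : Function.Injective g := by
    intro t t' h
    by_contra hne
    have := hpair _ _ (fun h' => hne (bigCell_injective m hm h')) h
    rw [cellValue_bigCell m T hm, cellValue_bigCell m T hm] at this
    omega
  have hcard : Fintype.card {i // ¬ i ∈ Set.range g} = m := by
    have : Fintype.card {i // i ∈ Set.range g} = 5 * m := by
      rw [← Fintype.card_congr (Equiv.ofInjective _ hg), Fintype.card_fin]
    rw [Fintype.card_subtype_compl, this, Fintype.card_fin]; omega
  let e := Fintype.equivFinOfCardEq hcard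
  have hdiag : ∀ j, ¬ L (diagCell m j) ∈ Set.range g := by
    rintro j ⟨t, ht⟩
    have := hpair _ _ (fun h' => bigCell_ne m hm t (by rw [h']; rfl)) ht
    rw [cellValue_bigCell m T hm, cellValue_diagCell] at this
    have := ha j j.2
    omega
  let f : Fin (3 * m) → Fin m := fun j => e ⟨L (diagCell m j), hdiag j⟩
  have hle : ∀ i, ∑ j with f j = i, a (j : ℕ) ≤ T := by
    intro i
    rw [← hEq (e.symm i).1]
    calc ∑ j with f j = i, a (j : ℕ)
        = ∑ p ∈ (Finset.univ.filter fun j => f j = i).image (diagCell m),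
            cellValue m T a p.1 p.2 := by
          rw [Finset.sum_image (fun _ _ _ _ h => diagCell_injective m h)]
          simp only [cellValue_diagCell]
      _ ≤ _ := by
          apply Finset.sum_le_sum_of_subset
          intro p hp
          simp only [Finset.mem_image, Finset.mem_filter, Finset.mem_univ, true_and] at hp ⊢
          obtain ⟨j, hj, rfl⟩ := hp
          rw [← hj]
          simp [f]
  have hsumT : ∀ i, ∑ j with f j = i, a (j : ℕ) = T := by
    have htot : ∑ i : Fin m, ∑ j with f j = i, a (j : ℕ) = ∑ i : Fin m, T := by
      rw [Finset.sum_fiberwise, Fin.sum_univ_eq_sum_range a, hsum]; simp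
    intro i
    exact (Finset.sum_eq_sum_iff_of_le fun i _ => hle i).1 htot i (Finset.mem_univ i)
  refine ⟨f, fun i => ⟨?_, hsumT i⟩⟩
  have h4 : (Finset.univ.filter fun j => f j = i).card * (T + 1) ≤ 4 * T := by
    rw [← hsumT i, Finset.mul_sum, ← smul_eq_mul, ← Finset.sum_const, hsumT i]
    exact Finset.sum_le_sum fun j _ => (ha j j.2).1
  have h2 : 2 * T + (Finset.univ.filter fun j => f j = i).card
      ≤ (Finset.univ.filter fun j => f j = i).card * T := by
    have h := Finset.sum_le_sum (s := Finset.univ.filter fun j => f j = i)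
      (f := fun j : Fin (3 * m) => 2 * a j + 1) (g := fun _ => T) fun j _ => (ha j j.2).2
    rwa [Finset.sum_add_distrib, ← Finset.mul_sum, hsumT i, ← Finset.card_eq_sum_ones,
      Finset.sum_const, smul_eq_mul] at h
  generalize (Finset.univ.filter fun j => f j = i).card = c at h4 h2
  have : c < 4 := by by_contra h; nlinarith
  have : 2 < c := by by_contra h; nlinarith
  omega

/-! ### From a partition to an allocation -/

/-- Row shifts for the corner array: pairwise distinct, with values `0` and `2m + 1` in the
rows `3m - 2` and `3m - 1`. -/
def shift (m j : ℕ) : ℕ :=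
  if j = 3 * m - 2 then 0 else if j = 3 * m - 1 then 2 * m + 1
  else if j < 2 * m then j + 1 else j + 2

theorem shift_inj {m j j' : ℕ} (h : shift m j = shift m j') : j = j' := by
  unfold shift at h
  split_ifs at h <;> omega

theorem shift_lt {m j : ℕ} (hm : 3 ≤ m) (hj : j < 3 * m) : shift m j < 5 * m := by
  unfold shift
  split_ifs <;> omega

/-- Addition modulo `5m`, for summands below `5m`. -/
def wrap (m x : ℕ) : ℕ := if x < 5 * m then x else x - 5 * m

theorem wrap_lt {m x : ℕ} (hx : x < 2 * (5 * m)) : wrap m x < 5 * m := by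
  unfold wrap; split_ifs <;> omega

theorem wrap_add_inj {m x y z : ℕ} (hx : x < 5 * m) (hy : y < 5 * m)
    (h : wrap m (x + z) = wrap m (y + z)) : x = y := by
  unfold wrap at h; split_ifs at h <;> omega

/-- The top left `3m × 3m` corner: the diagonal follows `f` with symbols below `m`; off the
diagonal there is a circulant-like pattern on the symbols from `m` on, whose shifts are chosen to
put each of these symbols on one cell of value `T`. -/
def corner (m : ℕ) (f : Fin (3 * m) → Fin m) (j k : ℕ) : ℕ :=
  if h : j = k ∧ j < 3 * m then f ⟨j, h.2⟩ else m + wrap m (k + shift m j)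

theorem corner_lt {m : ℕ} (hm : 3 ≤ m) (f : Fin (3 * m) → Fin m) {j k : ℕ} (hj : j < 3 * m)
    (hk : k < 3 * m) : corner m f j k < 6 * m := by
  unfold corner
  split_ifs with h
  · have := (f ⟨j, hj⟩).2; omega
  · have := shift_lt hm hj
    have := wrap_lt (m := m) (x := k + shift m j) (by omega)
    omega

theorem corner_row {m : ℕ} (f : Fin (3 * m) → Fin m) {j k k' : ℕ} (hj : j < 3 * m)
    (hk : k < 3 * m) (hk' : k' < 3 * m) (h : corner m f j k = corner m f j k') : k = k' := by
  have := (f ⟨j, hj⟩).2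
  unfold corner at h
  split_ifs at h
  · omega
  · omega
  · omega
  · exact wrap_add_inj (by omega) (by omega) (Nat.add_left_cancel h)

theorem corner_col {m : ℕ} (hm : 3 ≤ m) (f : Fin (3 * m) → Fin m) {j j' k : ℕ} (hj : j < 3 * m)
    (hj' : j' < 3 * m) (h : corner m f j k = corner m f j' k) : j = j' := by
  have := (f ⟨j, hj⟩).2
  have := (f ⟨j', hj'⟩).2
  unfold corner at h
  split_ifs at h
  · omega
  · omega
  · omega
  · rw [add_comm k, add_comm k] at h
    exact shift_inj
      (wrap_add_inj (shift_lt hm hj) (shift_lt hm hj') (Nat.add_left_cancel h))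

theorem corner_bigCell {m : ℕ} (hm : 3 ≤ m) (f : Fin (3 * m) → Fin m) (t : Fin (5 * m)) :
    corner m f (bigCell m t).1 (bigCell m t).2 = m + t := by
  have hne : ((bigCell m t).1 : ℕ) ≠ (bigCell m t).2 :=
    fun h => bigCell_ne m hm t (Fin.ext h)
  unfold corner
  rw [dif_neg (fun h => hne h.1)]
  unfold bigCell
  split_ifs with h
  · simp [shift, wrap, t.2]
  · have h1 : shift m (3 * m - 1) = 2 * m + 1 := by
      unfold shift; rw [if_neg (by omega), if_pos rfl]
    simp only [h1]
    rw [Nat.sub_add_cancel (by omega), wrap, if_pos t.2]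

/-- A partition into triples of sum `T` yields a Latin square all of whose symbols collect
value at least `T`. -/
theorem latin_of_partition (m T : ℕ) (hm : 3 ≤ m) (a : ℕ → ℕ) (f : Fin (3 * m) → Fin m)
    (hf : ∀ i : Fin m, ∑ j ∈ Finset.univ.filter (fun j => f j = i), a (j : ℕ) = T) :
    ∃ L : Fin (6 * m) → Fin (6 * m) → Fin (6 * m), (∀ j, Function.Injective (L j)) ∧
      (∀ k, Function.Injective fun j => L j k) ∧
      ∀ i, T ≤ ∑ p : Fin (6 * m) × Fin (6 * m) with L p.1 p.2 = i,
        cellValue m T a p.1 p.2 := by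
  classical
  obtain ⟨L, hr, hc, hL⟩ := extend_square (3 * m) (6 * m) (by omega)
    (fun j k => ⟨corner m f j k, corner_lt hm f j.2 k.2⟩)
    (fun j k k' h => Fin.ext (corner_row f j.2 k.2 k'.2 (congrArg Fin.val h)))
    (fun k j j' h => Fin.ext (corner_col hm f j.2 j'.2 (congrArg Fin.val h)))
  refine ⟨L, hr, hc, fun i => ?_⟩
  by_cases hi : (i : ℕ) < m
  · -- agents below `m` own the diagonal cells of their triple
    calc T = ∑ p ∈ (Finset.univ.filter fun j => f j = ⟨i, hi⟩).image (diagCell m),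
            cellValue m T a p.1 p.2 := by
          rw [Finset.sum_image (fun _ _ _ _ h => diagCell_injective m h)]
          simp only [cellValue_diagCell, hf]
      _ ≤ _ := by
          apply Finset.sum_le_sum_of_subset
          intro p hp
          simp only [Finset.mem_image, Finset.mem_filter, Finset.mem_univ, true_and] at hp ⊢
          obtain ⟨j, hj, rfl⟩ := hp
          rw [hL _ _ j.2 j.2]
          ext
          simp [diagCell, corner, hj]
  · -- agent `m + t` owns the `t`-th cell of value `T`
    let t : Fin (5 * m) := ⟨i - m, by omega⟩
    have h1 : ((bigCell m t).1 : ℕ) < 3 * m := by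
      unfold bigCell; split_ifs <;> simp only <;> omega
    have h2 : ((bigCell m t).2 : ℕ) < 3 * m := by
      unfold bigCell; split_ifs <;> simp only <;> omega
    have hmem : bigCell m t ∈ Finset.univ.filter
        fun p : Fin (6 * m) × Fin (6 * m) => L p.1 p.2 = i := by
      simp only [Finset.mem_filter, Finset.mem_univ, true_and]
      rw [hL _ _ h1 h2]
      ext
      simp only [corner_bigCell hm, t]
      omega
    refine le_trans (le_of_eq (cellValue_bigCell m T hm a t).symm) ?_
    exact Finset.single_le_sum (f := fun p : Fin (6 * m) × Fin (6 * m) => cellValue m T a p.1 p.2)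
      (fun _ _ => Nat.zero_le _) hmem


/-- for the 3-Partition reduction instance of order `6m` (0-based
indexing: `a l` for `l < 3m` is `a_{l+1}`, paper item `3m-1` is index `3m-2`,
paper item `3m` is index `3m-1`), a proportional (PROP) complete allocation exists iff
`[3m]` can be partitioned into `m` triples each summing to `T`. -/
theorem stmt_16 (m T : ℕ) (hm : 3 ≤ m) (hT : 0 < T) (a : ℕ → ℕ)
    (ha_pos : ∀ j, j < 3 * m → 0 < a j)
    (ha : ∀ j, j < 3 * m → T < 4 * a j ∧ 2 * a j < T)
    (hsum : ∑ j ∈ Finset.range (3 * m), a j = m * T)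
    (v : Fin (6 * m) → Fin (6 * m) → Fin (6 * m) → ℕ)
    (hv : ∀ i j k, v i j k =
      if (j : ℕ) = (k : ℕ) ∧ (j : ℕ) < 3 * m then a (j : ℕ)
      else if (j : ℕ) = 3 * m - 2 ∧ (k : ℕ) < 2 * m + 1 then T
      else if (j : ℕ) = 3 * m - 1 ∧ (k : ℕ) < 3 * m - 1 then T
      else 0) :
    (∃ A : Finset (Fin (6 * m) × Fin (6 * m) × Fin (6 * m)),
        IsCompleteAlloc (6 * m) A ∧ PROP v A) ↔
    (∃ f : Fin (3 * m) → Fin m, ∀ i : Fin m,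
        (Finset.univ.filter (fun j => f j = i)).card = 3 ∧
        ∑ j ∈ Finset.univ.filter (fun j => f j = i), a (j : ℕ) = T) := by
  have hv' : ∀ i j k, v i j k = cellValue m T a j k := hv
  constructor
  · rintro ⟨A, hA, hP⟩
    obtain ⟨L, hL⟩ := exists_owner hA
    exact partition_of_owner m T hm hT a ha hsum L ((prop_iff m T hm a hsum v hv' hL).1 hP)
  · rintro ⟨f, hf⟩
    obtain ⟨L, hr, hc, hLT⟩ := latin_of_partition m T hm a f (fun i => (hf i).2)
    let A : Finset (Fin (6 * m) × Fin (6 * m) × Fin (6 * m)) :=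
      Finset.univ.image fun p : Fin (6 * m) × Fin (6 * m) => (L p.1 p.2, p)
    have hA : ∀ i p, (i, p) ∈ A ↔ L p.1 p.2 = i := by
      intro i p
      simp only [A, Finset.mem_image, Finset.mem_univ, true_and, Prod.mk.injEq]
      exact ⟨fun ⟨q, hq, hqp⟩ => hqp ▸ hq, fun h => ⟨p, h, rfl⟩⟩
    refine ⟨A, ⟨⟨fun i j k k' h h' => ?_, fun i j j' k h h' => ?_, fun i i' j k h h' => ?_⟩, ?_⟩,
      (prop_iff m T hm a hsum v hv' (L := fun p => L p.1 p.2) hA).2 hLT⟩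
    · exact hr j (((hA _ _).1 h).trans ((hA _ _).1 h').symm)
    · exact hc k (((hA _ _).1 h).trans ((hA _ _).1 h').symm)
    · exact ((hA _ _).1 h).symm.trans ((hA _ _).1 h')
    · rw [Finset.card_image_of_injective _ (fun p q h => (Prod.mk.inj h).2)]
      simp [sq]
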